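/- For every L ≥ 0, the moments of the Calkin–Wilf limit distribution satisfy M_L = Σ_{i=0}^{L} C(L,i) · m_i · b_{L−i}, where C(L,i) is the binomial coefficient. -/

import Mathlib

open Filter

/-- The generations of the Calkin–Wilf tree: `CW 0 = [1/1]` is the first
generation, and each generation is obtained from the previous one by replacing
each entry `x` by `x/(x+1)` and `x+1`, in this order.  Thus the `n`-th
generation of the paper is `CW (n-1)`. -/
def CW : ℕ → List ℚ
  | 0 => [1]
  | n + 1 => (CW n).flatMap (fun x => [x / (x + 1), x + 1])

open scoped Classical in
/-- `Fcw n` is the distribution function of the `(n+1)`-st generation of the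
Calkin–Wilf tree: `Fcw (n-1) x = F_n(x) = 2^(1-n) · #{j : x_j^(n) ≤ x}`. -/
noncomputable def Fcw (n : ℕ) (x : ℝ) : ℝ :=
  ((CW n).countP (fun q => decide ((q : ℝ) ≤ x))) / 2 ^ n

open MeasureTheory

/-!
The self-similarity of the tree, `F x = (1 + F (x - 1)) / 2` for `1 ≤ x` and
`F x = F (x / (1 - x)) / 2` for `0 ≤ x < 1`, says that `μ` is the equal mixture of its images under
`x ↦ x / (x + 1)` and `x ↦ x + 1`. Unrolling the second branch, a `μ`-distributed variable is
`X / (X + 1) + N`, where `X` has law `μ` and `N` is an independent number of tails before the first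
head of a fair coin. So `μ` is a convolution with a geometric law whose moments are the `b_s`, and
the formula is the binomial expansion of `(X / (X + 1) + N) ^ L`.
-/

open ProbabilityTheory Set Topology

lemma integral_pow_conv {𝕜 : Type*} [RCLike 𝕜] {μ ν : Measure 𝕜} [SFinite μ] [SFinite ν]
    {n : ℕ} (hμ : ∀ i ≤ n, Integrable (fun x ↦ x ^ i) μ)
    (hν : ∀ i ≤ n, Integrable (fun x ↦ x ^ i) ν) :
    ∫ x, x ^ n ∂(μ ∗ ν) = ∑ i ∈ Finset.range (n + 1),
      (n.choose i : 𝕜) * (∫ x, x ^ i ∂μ) * ∫ x, x ^ (n - i) ∂ν := by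
  have hterm : ∀ i ∈ Finset.range (n + 1),
      Integrable (fun z : 𝕜 × 𝕜 ↦ z.1 ^ i * z.2 ^ (n - i) * (n.choose i : 𝕜)) (μ.prod ν) :=
    fun i hi ↦ ((hμ i (Finset.mem_range_succ_iff.1 hi)).mul_prod
      (hν (n - i) (n.sub_le i))).mul_const _
  rw [Measure.conv, integral_map (by fun_prop) (by fun_prop)]
  simp only [add_pow]
  rw [integral_finsetSum _ hterm]
  refine Finset.sum_congr rfl fun i _ ↦ ?_
  rw [integral_mul_const, integral_prod_mul (fun x ↦ x ^ i) (fun x ↦ x ^ (n - i))]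
  ring

section CharFun

variable {E : Type*} [NormedAddCommGroup E] [InnerProductSpace ℝ E] [MeasurableSpace E]

lemma charFun_smul_measure (c : ENNReal) (μ : Measure E) (t : E) :
    charFun (c • μ) t = c.toReal * charFun μ t :=
  (integral_smul_measure _ c).trans Complex.real_smul

variable [OpensMeasurableSpace E] [SecondCountableTopology E]

lemma integrable_cexp_inner (μ : Measure E) [IsFiniteMeasure μ] (t : E) :
    Integrable (fun x ↦ Complex.exp (inner ℝ x t * Complex.I)) μ :=
  .of_bound (by fun_prop) 1 (.of_forall fun x ↦ (Complex.norm_exp_ofReal_mul_I _).le)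

lemma charFun_add_measure (μ ν : Measure E) [IsFiniteMeasure μ] [IsFiniteMeasure ν] (t : E) :
    charFun (μ + ν) t = charFun μ t + charFun ν t :=
  integral_add_measure (integrable_cexp_inner μ t) (integrable_cexp_inner ν t)

end CharFun

section Geometric

variable {p : unitInterval}

lemma norm_one_sub_lt_one (hp : p ≠ 0) : ‖(1 - p : ℝ)‖ < 1 := by
  rw [Real.norm_eq_abs, abs_lt]
  constructor <;> grind

lemma integrable_pow_map_cast_geometricMeasure (hp : p ≠ 0) (n : ℕ) :
    Integrable (fun x : ℝ ↦ x ^ n) ((geometricMeasure p).map (↑)) := by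
  rw [integrable_map_measure (by fun_prop) .of_discrete, integrable_geometricMeasure_iff hp]
  refine ((summable_pow_mul_geometric_of_norm_lt_one n (norm_one_sub_lt_one hp)).mul_right
    (p : ℝ)).congr fun k ↦ ?_
  simp only [Function.comp_apply, norm_pow, RCLike.norm_natCast]
  ring

lemma norm_one_sub_mul_exp_lt_one (hp : p ≠ 0) (t : ℝ) :
    ‖(1 - p : ℂ) * Complex.exp (t * Complex.I)‖ < 1 := by
  rw [norm_mul, Complex.norm_exp_ofReal_mul_I, mul_one]
  exact_mod_cast norm_one_sub_lt_one hp

lemma charFun_map_cast_geometricMeasure (hp : p ≠ 0) (t : ℝ) :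
    charFun ((geometricMeasure p).map ((↑) : ℕ → ℝ)) t =
      p / (1 - (1 - p) * Complex.exp (t * Complex.I)) := by
  rw [charFun_apply_real, integral_map .of_discrete (by fun_prop), integral_geometricMeasure hp]
  calc ∑' n : ℕ, ((1 - p : ℝ) ^ n * p) • Complex.exp (t * (n : ℝ) * Complex.I)
    _ = ∑' n : ℕ, p * ((1 - p) * Complex.exp (t * Complex.I)) ^ n := by
      congr with n
      rw [mul_pow, ← Complex.exp_nat_mul, Complex.real_smul]
      push_cast
      ring_nf
    _ = p / (1 - (1 - p) * Complex.exp (t * Complex.I)) := by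
      rw [tsum_mul_left, tsum_geometric_of_norm_lt_one (norm_one_sub_mul_exp_lt_one hp t),
        div_eq_mul_inv]

-- On characteristic functions `h` reads `φ_μ = p φ_ν + (1 - p) e^{it} φ_μ`.
lemma eq_conv_geometricMeasure_of_eq_smul_add_smul_map {μ ν : Measure ℝ}
    [IsFiniteMeasure μ] [IsFiniteMeasure ν] (hp : p ≠ 0)
    (h : μ = ENNReal.ofReal p • ν + ENNReal.ofReal (1 - p) • μ.map (· + 1)) :
    μ = ν ∗ (geometricMeasure p).map (↑) := by
  refine Measure.ext_of_charFun (funext fun t ↦ ?_)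
  have hden : 1 - (1 - p) * Complex.exp (t * Complex.I) ≠ 0 := by
    refine sub_ne_zero.2 fun h1 ↦ (norm_one_sub_mul_exp_lt_one hp t).ne ?_
    rw [← h1, norm_one]
  have : IsFiniteMeasure (ENNReal.ofReal p • ν) := ν.smul_finite ENNReal.ofReal_ne_top
  have : IsFiniteMeasure (ENNReal.ofReal (1 - p) • μ.map (· + 1)) :=
    Measure.smul_finite _ ENNReal.ofReal_ne_top
  have hμ : charFun μ t
      = p * charFun ν t + (1 - p) * (charFun μ t * Complex.exp (t * Complex.I)) := by
    conv_lhs => rw [h, charFun_add_measure, charFun_smul_measure, charFun_smul_measure,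
      charFun_map_add_const, ENNReal.toReal_ofReal p.2.1,
      ENNReal.toReal_ofReal (unitInterval.one_minus_nonneg p)]
    simp
  rw [charFun_conv, charFun_map_cast_geometricMeasure hp]
  field_simp
  linear_combination hμ

/-- The success probability `1 / 2`, as a parameter of `geometricMeasure`. -/
noncomputable def oneHalf : unitInterval := ⟨1 / 2, by norm_num, by norm_num⟩

lemma oneHalf_ne_zero : oneHalf ≠ 0 :=
  fun h ↦ by simpa [oneHalf] using congrArg Subtype.val h

lemma integral_pow_map_cast_geometricMeasure_oneHalf (n : ℕ) :
    ∫ x : ℝ, x ^ n ∂(geometricMeasure oneHalf).map (↑) =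
      ∑' k : ℕ, (k : ℝ) ^ n / 2 ^ (k + 1) := by
  rw [integral_map .of_discrete (by fun_prop), integral_geometricMeasure oneHalf_ne_zero]
  congr with k
  simp only [oneHalf, smul_eq_mul, sub_half, one_div_pow, pow_succ]
  field_simp

end Geometric

lemma countP_flatMap_pair {α β : Type*} (p : β → Bool) (f g : α → β) (l : List α) :
    (l.flatMap fun a ↦ [f a, g a]).countP p = l.countP (p ∘ f) + l.countP (p ∘ g) := by
  induction l with
  | nil => rfl
  | cons a l ih =>
    simp only [List.flatMap_cons, List.countP_append, List.countP_cons, List.countP_nil, ih,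
      Function.comp_apply]
    ring

section DivAddOne

variable {𝕜 : Type*} [Field 𝕜] [LinearOrder 𝕜] [IsStrictOrderedRing 𝕜] {x y : 𝕜}

lemma div_add_one_le_iff (hy : 0 < y) (hx : x < 1) :
    y / (y + 1) ≤ x ↔ y ≤ x / (1 - x) := by
  rw [div_le_iff₀ (by positivity), le_div_iff₀ (by linarith)]
  constructor <;> intro h <;> linarith

lemma div_add_one_lt_one (hy : 0 < y) : y / (y + 1) < 1 :=
  (div_lt_one (by positivity)).2 (lt_add_one y)

end DivAddOne

lemma pos_of_mem_CW {n : ℕ} {q : ℚ} (hq : q ∈ CW n) : 0 < q := by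
  induction n generalizing q with
  | zero => simp_all [CW]
  | succ n ih =>
    obtain ⟨r, hr, hq⟩ := List.mem_flatMap.1 hq
    have hr := ih hr
    obtain rfl | rfl : q = r / (r + 1) ∨ q = r + 1 := by simpa using hq
    all_goals positivity

lemma length_CW (n : ℕ) : (CW n).length = 2 ^ n := by
  induction n with
  | zero => rfl
  | succ n ih => simp [CW, ih, pow_succ]

-- The coercion in `Fcw` is elaborated on the list, so `Fcw` counts in the image of `CW n` in
-- `List ℝ`.
lemma Fcw_eq_countP_div (n : ℕ) (x : ℝ) :
    Fcw n x = (CW n).countP (fun q : ℚ ↦ (q : ℝ) ≤ x) / 2 ^ n := by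
  simp only [Fcw, List.bind_eq_flatMap, List.pure_def, ← List.map_eq_flatMap, List.countP_map]
  congr!

lemma Fcw_nonneg (n : ℕ) (x : ℝ) : 0 ≤ Fcw n x := by
  rw [Fcw]
  positivity

lemma Fcw_apply_zero (n : ℕ) : Fcw n 0 = 0 := by
  have : (CW n).countP (fun q : ℚ ↦ (q : ℝ) ≤ 0) = 0 :=
    List.countP_eq_zero.2 fun q hq ↦ by simpa using pos_of_mem_CW hq
  rw [Fcw_eq_countP_div, this, Nat.cast_zero, zero_div]

lemma countP_CW_succ (n : ℕ) (x : ℝ) :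
    (CW (n + 1)).countP (fun q : ℚ ↦ (q : ℝ) ≤ x) =
      (CW n).countP (fun q : ℚ ↦ (q : ℝ) / (q + 1) ≤ x)
        + (CW n).countP (fun q : ℚ ↦ (q : ℝ) ≤ x - 1) := by
  simp [CW, countP_flatMap_pair, Function.comp_def, le_sub_iff_add_le]

lemma Fcw_succ_of_lt_one (n : ℕ) {x : ℝ} (hx : x < 1) :
    Fcw (n + 1) x = Fcw n (x / (1 - x)) / 2 := by
  have hleft : (CW n).countP (fun q : ℚ ↦ (q : ℝ) / (q + 1) ≤ x)
      = (CW n).countP (fun q : ℚ ↦ (q : ℝ) ≤ x / (1 - x)) :=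
    List.countP_congr fun q hq ↦ by
      simpa using div_add_one_le_iff (Rat.cast_pos.2 (pos_of_mem_CW hq)) hx
  have hright : (CW n).countP (fun q : ℚ ↦ (q : ℝ) ≤ x - 1) = 0 :=
    List.countP_eq_zero.2 fun q hq ↦ by
      have : (0 : ℝ) < q := Rat.cast_pos.2 (pos_of_mem_CW hq)
      simpa using by linarith
  rw [Fcw_eq_countP_div, Fcw_eq_countP_div, countP_CW_succ, hleft, hright, add_zero, pow_succ,
    div_div]

lemma Fcw_succ_of_one_le (n : ℕ) {x : ℝ} (hx : 1 ≤ x) :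
    Fcw (n + 1) x = (1 + Fcw n (x - 1)) / 2 := by
  have hleft : (CW n).countP (fun q : ℚ ↦ (q : ℝ) / (q + 1) ≤ x) = 2 ^ n := by
    rw [← length_CW, List.countP_eq_length]
    intro q hq
    simpa using (div_add_one_lt_one (Rat.cast_pos.2 (pos_of_mem_CW hq))).le.trans hx
  rw [Fcw_eq_countP_div, Fcw_eq_countP_div, countP_CW_succ, hleft, pow_succ]
  push_cast
  field_simp

/-- `F` is a limit distribution function of the generations of the Calkin–Wilf tree. As in the
theorem, only the values on `[0, ∞)` are prescribed; the predicate is also used for `cdf μ`. -/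
def IsCalkinWilfLimit (F : ℝ → ℝ) : Prop :=
  ∀ x, 0 ≤ x → Tendsto (fun n ↦ Fcw n x) atTop (𝓝 (F x))

namespace IsCalkinWilfLimit

section Function

variable {F : ℝ → ℝ}

lemma apply_zero (hF : IsCalkinWilfLimit F) : F 0 = 0 :=
  tendsto_nhds_unique (hF 0 le_rfl) (by simp [Fcw_apply_zero])

lemma nonneg (hF : IsCalkinWilfLimit F) {x : ℝ} (hx : 0 ≤ x) : 0 ≤ F x :=
  ge_of_tendsto' (hF x hx) fun n ↦ Fcw_nonneg n x

lemma eq_of_lt_one (hF : IsCalkinWilfLimit F) {x : ℝ} (h0 : 0 ≤ x) (h1 : x < 1) :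
    F x = F (x / (1 - x)) / 2 := by
  refine tendsto_nhds_unique ((tendsto_add_atTop_iff_nat 1).2 (hF x h0)) ?_
  simp only [Fcw_succ_of_lt_one _ h1]
  exact (hF _ (div_nonneg h0 (sub_nonneg.2 h1.le))).div_const 2

lemma eq_of_one_le (hF : IsCalkinWilfLimit F) {x : ℝ} (hx : 1 ≤ x) :
    F x = (1 + F (x - 1)) / 2 := by
  refine tendsto_nhds_unique ((tendsto_add_atTop_iff_nat 1).2 (hF x (zero_le_one.trans hx))) ?_
  simp only [Fcw_succ_of_one_le _ hx]
  exact ((hF _ (sub_nonneg.2 hx)).const_add 1).div_const 2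

lemma apply_natCast (hF : IsCalkinWilfLimit F) (k : ℕ) : F k = 1 - (1 / 2) ^ k := by
  induction k with
  | zero => simp [hF.apply_zero]
  | succ k ih =>
    rw [Nat.cast_succ, hF.eq_of_one_le (by simp), add_sub_cancel_right, ih]
    ring

lemma tendsto_natCast (hF : IsCalkinWilfLimit F) :
    Tendsto (fun k : ℕ ↦ F k) atTop (𝓝 1) := by
  simp only [hF.apply_natCast]
  simpa using (tendsto_pow_atTop_nhds_zero_of_lt_one (r := (1 / 2 : ℝ)) (by norm_num)
    (by norm_num)).const_sub 1

lemma cdf_of_measure_Ioc (hF : IsCalkinWilfLimit F) {μ : Measure ℝ} [IsProbabilityMeasure μ]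
    (hμ : ∀ a b, a ≤ b → μ (Ioc a b) = ENNReal.ofReal (F b - F a)) :
    IsCalkinWilfLimit (cdf μ) := by
  have hadd : ∀ x, 0 ≤ x → cdf μ x = cdf μ 0 + F x := by
    intro x hx
    have h := (cdf μ).measure_Ioc 0 x
    rw [measure_cdf, hμ 0 x hx, hF.apply_zero, sub_zero, ENNReal.ofReal_eq_ofReal_iff
      (hF.nonneg hx) (sub_nonneg.2 (monotone_cdf μ hx))] at h
    linarith
  have hzero : cdf μ 0 = 0 := by
    have h := (tendsto_cdf_atTop μ).comp (tendsto_natCast_atTop_atTop (R := ℝ))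
    have h' := hF.tendsto_natCast.const_add (cdf μ 0)
    have := tendsto_nhds_unique (h.congr fun k : ℕ ↦ hadd k k.cast_nonneg) h'
    linarith
  intro x hx
  rw [hadd x hx, hzero, zero_add]
  exact hF x hx

end Function

section Measure

variable {μ : Measure ℝ}

lemma cdf_of_nonpos (hμ : IsCalkinWilfLimit (cdf μ)) {x : ℝ} (hx : x ≤ 0) : cdf μ x = 0 :=
  le_antisymm ((monotone_cdf μ hx).trans_eq hμ.apply_zero) (cdf_nonneg μ x)

variable [IsProbabilityMeasure μ]

lemma ae_pos (hμ : IsCalkinWilfLimit (cdf μ)) : ∀ᵐ x ∂μ, 0 < x := by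
  have h : μ.real (Iic 0) = 0 := by rw [← cdf_eq_real, hμ.apply_zero]
  simpa [ae_iff, Iic_def] using (measureReal_eq_zero_iff).1 h

lemma measureReal_preimage_div_add_one_of_lt_one (hμ : IsCalkinWilfLimit (cdf μ)) {x : ℝ}
    (hx : x < 1) : μ.real ((fun y ↦ y / (y + 1)) ⁻¹' Iic x) = cdf μ (x / (1 - x)) := by
  rw [cdf_eq_real]
  refine measureReal_congr ?_
  filter_upwards [hμ.ae_pos] with y hy
  exact propext (div_add_one_le_iff hy hx)

lemma measureReal_preimage_div_add_one_of_one_le (hμ : IsCalkinWilfLimit (cdf μ)) {x : ℝ}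
    (hx : 1 ≤ x) : μ.real ((fun y ↦ y / (y + 1)) ⁻¹' Iic x) = 1 := by
  refine (measureReal_congr ?_).trans (probReal_univ (μ := μ))
  filter_upwards [hμ.ae_pos] with y hy
  exact propext (iff_of_true ((div_add_one_lt_one hy).le.trans hx) trivial)

lemma cdf_eq_half_add (hμ : IsCalkinWilfLimit (cdf μ)) (x : ℝ) :
    cdf μ x = (μ.real ((fun y ↦ y / (y + 1)) ⁻¹' Iic x) + cdf μ (x - 1)) / 2 := by
  rcases lt_or_ge x 1 with h1 | h1
  · rw [hμ.measureReal_preimage_div_add_one_of_lt_one h1, hμ.cdf_of_nonpos (sub_nonpos.2 h1.le),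
      add_zero]
    rcases le_total x 0 with h0 | h0
    · have hx : x / (1 - x) ≤ 0 := div_nonpos_of_nonpos_of_nonneg h0 (sub_nonneg.2 h1.le)
      rw [hμ.cdf_of_nonpos h0, hμ.cdf_of_nonpos hx, zero_div]
    · exact hμ.eq_of_lt_one h0 h1
  · rw [hμ.measureReal_preimage_div_add_one_of_one_le h1]
    exact hμ.eq_of_one_le h1

lemma eq_smul_map_add_smul_map (hμ : IsCalkinWilfLimit (cdf μ)) :
    μ = ENNReal.ofReal (1 / 2) • μ.map (fun y ↦ y / (y + 1))
      + ENNReal.ofReal (1 / 2) • μ.map (· + 1) := by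
  have hfin (ν : Measure ℝ) [IsFiniteMeasure ν] : IsFiniteMeasure (ENNReal.ofReal (1 / 2) • ν) :=
    ν.smul_finite ENNReal.ofReal_ne_top
  have := hfin (μ.map (fun y ↦ y / (y + 1)))
  have := hfin (μ.map (· + 1))
  refine Measure.ext_of_Iic _ _ fun x ↦ (measureReal_eq_measureReal_iff).1 ?_
  rw [measureReal_add_apply, measureReal_ennreal_smul_apply, measureReal_ennreal_smul_apply,
    map_measureReal_apply (by fun_prop) measurableSet_Iic,
    map_measureReal_apply (by fun_prop) measurableSet_Iic, preimage_add_const_Iic,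
    ENNReal.toReal_ofReal (by norm_num), ← cdf_eq_real, ← cdf_eq_real, hμ.cdf_eq_half_add x]
  ring

lemma eq_conv_geometricMeasure (hμ : IsCalkinWilfLimit (cdf μ)) :
    μ = μ.map (fun y ↦ y / (y + 1)) ∗ (geometricMeasure oneHalf).map (↑) := by
  refine eq_conv_geometricMeasure_of_eq_smul_add_smul_map oneHalf_ne_zero ?_
  have h : (1 - oneHalf : ℝ) = 1 / 2 := sub_half 1
  rw [h]
  exact hμ.eq_smul_map_add_smul_map

lemma integrable_pow_map_div_add_one (hμ : IsCalkinWilfLimit (cdf μ)) (n : ℕ) :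
    Integrable (fun x ↦ x ^ n) (μ.map (fun y ↦ y / (y + 1))) := by
  rw [integrable_map_measure (by fun_prop) (by fun_prop)]
  refine .of_bound (Measurable.aestronglyMeasurable (by fun_prop)) 1 ?_
  filter_upwards [hμ.ae_pos] with y hy
  have hnonneg : 0 ≤ y / (y + 1) := by positivity
  rw [Function.comp_apply, norm_pow, Real.norm_of_nonneg hnonneg]
  exact pow_le_one₀ hnonneg (div_add_one_lt_one hy).le

end Measure

end IsCalkinWilfLimit

/-- Let `F` be the limit distribution function of the Calkin–Wilf tree and `μ`
its Lebesgue–Stieltjes (probability) measure, so that `μ(a,b] = F(b) − F(a)`.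
With `M_k = ∫ x^k dμ`, `m_k = ∫ (x/(x+1))^k dμ` and
`b_s = ∑_{n=0}^∞ n^s/2^(n+1)`, the moments satisfy
`M_L = ∑_{i=0}^{L} C(L,i)·m_i·b_{L−i}` for every `L ≥ 0`. -/
theorem calkin_wilf_moments_formula (F : ℝ → ℝ)
    (hF : ∀ x : ℝ, 0 ≤ x → Tendsto (fun n => Fcw n x) atTop (nhds (F x)))
    (μ : Measure ℝ) (hprob : IsProbabilityMeasure μ)
    (hμ : ∀ a b : ℝ, a ≤ b → μ (Set.Ioc a b) = ENNReal.ofReal (F b - F a))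
    (L : ℕ) :
    ∫ x, x ^ L ∂μ = ∑ i ∈ Finset.range (L + 1),
      (L.choose i : ℝ) * (∫ x, (x / (x + 1)) ^ i ∂μ) *
        ∑' n : ℕ, (n : ℝ) ^ (L - i) / 2 ^ (n + 1) := by
  have hcdf : IsCalkinWilfLimit (cdf μ) := IsCalkinWilfLimit.cdf_of_measure_Ioc hF hμ
  calc ∫ x, x ^ L ∂μ
    _ = ∫ x, x ^ L ∂(μ.map (fun y ↦ y / (y + 1)) ∗ (geometricMeasure oneHalf).map (↑)) := by
      rw [← hcdf.eq_conv_geometricMeasure]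
    _ = ∑ i ∈ Finset.range (L + 1), (L.choose i : ℝ)
          * (∫ x, x ^ i ∂μ.map (fun y ↦ y / (y + 1)))
          * ∫ x, x ^ (L - i) ∂(geometricMeasure oneHalf).map (↑) :=
      integral_pow_conv (fun i _ ↦ hcdf.integrable_pow_map_div_add_one i)
        fun i _ ↦ integrable_pow_map_cast_geometricMeasure oneHalf_ne_zero i
    _ = _ := by
      refine Finset.sum_congr rfl fun i _ ↦ ?_
      rw [integral_map (by fun_prop) (by fun_prop), integral_pow_map_cast_geometricMeasure_oneHalf]
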